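/- Assume f satisfies (f_reg), (f_eq), (f_0) and (f_subc), and let R1 = 0. Then for every M > 0 there exists D > 0 such that for every d ≥ D, every solution u of the Cauchy problem with datum d on [0,R2], and every r ∈ [0, r1], one has u(r) + |u'(r)| ≥ M. -/

import Mathlib

open Real Set Filter Topology

noncomputable def phip (p s : ℝ) : ℝ := |s| ^ (p - 2) * s

def Freg (f : ℝ → ℝ) : Prop :=
  ContinuousOn f (Ici 0) ∧ ContDiffOn ℝ 1 f (Ioi 0)

def Feq (f : ℝ → ℝ) : Prop :=
  f 0 = 0 ∧ f 1 = 0 ∧ (∀ s : ℝ, 0 < s → s < 1 → f s < 0) ∧ (∀ s : ℝ, 1 < s → 0 < f s)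

def Fzero (p : ℝ) (f : ℝ → ℝ) : Prop :=
  ∃ c : ℝ, ∀ᶠ s in 𝓝[>] (0:ℝ), c ≤ f s / s ^ (p - 1)

noncomputable def pstar (p : ℝ) (N : ℕ) : EReal :=
  if p < (N:ℝ) then (((N:ℝ) * p / ((N:ℝ) - p) : ℝ) : EReal) else ⊤

noncomputable def fstar (f : ℝ → ℝ) (s : ℝ) : ℝ := sSup (f '' Icc 1 s)

noncomputable def Fint (f : ℝ → ℝ) (s : ℝ) : ℝ := ∫ σ in (1:ℝ)..s, f σ

def Fsubl (p : ℝ) (f : ℝ → ℝ) : Prop :=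
  ∃ M : ℝ, 0 < M ∧ ∀ ε > 0, ∀ᶠ s in atTop, f s / s ^ (p - 1) ≤ M + ε

def FsubcWith (p : ℝ) (N : ℕ) (f : ℝ → ℝ) (η : ℝ) : Prop :=
  (∀ c : ℝ, ∃ᶠ s in atTop, c < f s / s ^ (p - 1)) ∧
  0 < η ∧ η < 1 ∧
  ∃ L : ℝ, (L : EReal) < pstar p N ∧
    ∀ᶠ s in atTop, fstar f s * s / Fint f (η * s) ≤ L

def Fsubc (p : ℝ) (N : ℕ) (f : ℝ → ℝ) : Prop := ∃ η : ℝ, FsubcWith p N f η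

/-- A radial solution of the Neumann problem on `[R1,R2]`. -/
def NeumannSol (p : ℝ) (N : ℕ) (R1 R2 : ℝ) (f u : ℝ → ℝ) : Prop :=
  (∀ x ∈ Icc R1 R2, DifferentiableAt ℝ u x) ∧
  ContinuousOn (deriv u) (Icc R1 R2) ∧
  (∀ x ∈ Icc R1 R2, 0 < u x) ∧
  deriv u R1 = 0 ∧ deriv u R2 = 0 ∧
  ContinuousOn (fun x => x ^ (N - 1) * phip p (deriv u x)) (Icc R1 R2) ∧
  ∀ x ∈ Ioc R1 R2,
    HasDerivAt (fun t => t ^ (N - 1) * phip p (deriv u t)) (-(x ^ (N - 1)) * f (u x)) x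

noncomputable def fhat (f : ℝ → ℝ) (s : ℝ) : ℝ := if 0 ≤ s then f s else 0

noncomputable def Fhat (f : ℝ → ℝ) (s : ℝ) : ℝ := ∫ σ in (1:ℝ)..s, fhat f σ

/-- A solution of the Cauchy problem with datum `d`, for the nonlinearity `g`. -/
def CauchySol (p : ℝ) (N : ℕ) (R1 R2 : ℝ) (g u : ℝ → ℝ) (d : ℝ) : Prop :=
  (∀ x ∈ Icc R1 R2, DifferentiableAt ℝ u x) ∧
  ContinuousOn (deriv u) (Icc R1 R2) ∧
  u R1 = d ∧ deriv u R1 = 0 ∧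
  ContinuousOn (fun x => x ^ (N - 1) * phip p (deriv u x)) (Icc R1 R2) ∧
  ∀ x ∈ Ioc R1 R2,
    HasDerivAt (fun t => t ^ (N - 1) * phip p (deriv u t)) (-(x ^ (N - 1)) * g (u x)) x

noncomputable def rOne (R1 R2 : ℝ) (u : ℝ → ℝ) : ℝ :=
  sSup {x | x ∈ Icc R1 R2 ∧ ∀ s ∈ Ico R1 x, 0 < u s}

noncomputable def rZero (R2 η d : ℝ) (u : ℝ → ℝ) : ℝ :=
  sSup {x | x ∈ Icc 0 R2 ∧ ∀ s ∈ Ico 0 x, η * d < u s}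

noncomputable def energy (p : ℝ) (f u : ℝ → ℝ) (x : ℝ) : ℝ :=
  |deriv u x| ^ p / (p / (p - 1)) + Fhat f (u x)

def NonConstOn (R1 R2 : ℝ) (u : ℝ → ℝ) : Prop :=
  ∃ x ∈ Icc R1 R2, ∃ x' ∈ Icc R1 R2, u x ≠ u x'

def DistinctOn (R1 R2 : ℝ) (u v : ℝ → ℝ) : Prop :=
  ∃ x ∈ Icc R1 R2, u x ≠ v x

noncomputable def nOverPstar (p : ℝ) (N : ℕ) : ℝ :=
  if p < (N:ℝ) then ((N:ℝ) - p) / p else 0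

/-!
For `a ≥ max 0 ((N - p) / p)` the Pohozaev functional
`P t = t ^ N * E t + a * t ^ (N - 1) * φ_p (u' t) * u t`, where `E` is the energy, satisfies
`P' t ≥ t ^ (N - 1) * (N * F (u t) - a * u t * f (u t))`.  Let `r` be the first radius at which
`u = η * d`.  Subcriticality lets one choose `a` so that the bracket is at least a positive multiple
of `F (η * d)` on `[0, r]`, whence `P r ≥ c * F (η * d) * r ^ N`.  Integrating the equation shows
that `u` cannot drop from `d` to `η * d` too quickly, `F (η * d) * r ^ p ≥ κ * d ^ p`, while
`s * f s ≤ L * F s` forces `F s ≤ A * s ^ L`; interpolating the two gives `P r → ∞` as `d → ∞`.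
The bracket is bounded below on `[0, ∞)`, so beyond `r` the functional loses at most a constant,
whereas `P x` would be bounded if `u x + |u' x| < M`.
-/

section PhiP

variable {p q s : ℝ}

lemma mul_phip (hp : p ≠ 0) (s : ℝ) : s * phip p s = |s| ^ p := by
  rcases eq_or_ne s 0 with rfl | hs
  · simp [phip, hp]
  · have habs : 0 < |s| := abs_pos.mpr hs
    calc s * phip p s = |s| ^ (p - 2) * |s| ^ (2 : ℕ) := by rw [sq_abs, phip]; ring
      _ = |s| ^ p := by rw [← rpow_natCast, ← rpow_add habs]; norm_num

lemma abs_phip (hp : p ≠ 1) (s : ℝ) : |phip p s| = |s| ^ (p - 1) := by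
  rcases eq_or_ne s 0 with rfl | hs
  · simp [phip, sub_ne_zero.mpr hp]
  · have habs : 0 < |s| := abs_pos.mpr hs
    rw [phip, abs_mul, abs_of_pos (rpow_pos_of_pos habs _), ← rpow_add_one habs.ne']
    ring_nf

lemma abs_phip_rpow (hpq : p.HolderConjugate q) (s : ℝ) : |phip p s| ^ q = |s| ^ p := by
  rw [abs_phip hpq.lt.ne', ← rpow_mul (abs_nonneg s), hpq.sub_one_mul_conj]

lemma phip_phip (hpq : p.HolderConjugate q) (s : ℝ) : phip q (phip p s) = s := by
  rcases eq_or_ne s 0 with rfl | hs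
  · simp [phip]
  · have hexp : (p - 1) * (q - 2) + (p - 2) = 0 := by linarith [hpq.sub_one_mul_conj]
    rw [phip, abs_phip hpq.lt.ne', ← rpow_mul (abs_nonneg s), phip, ← mul_assoc,
      ← rpow_add (abs_pos.mpr hs), hexp, rpow_zero, one_mul]

lemma phip_nonpos_iff : phip p s ≤ 0 ↔ s ≤ 0 := by
  rcases eq_or_ne s 0 with rfl | hs
  · simp [phip]
  · have hweight : 0 < |s| ^ (p - 2) := rpow_pos_of_pos (abs_pos.mpr hs) _
    exact ⟨fun h => nonpos_of_mul_nonpos_right h hweight,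
      fun h => mul_nonpos_of_nonneg_of_nonpos hweight.le h⟩

lemma continuous_phip (hp : 1 < p) : Continuous (phip p) := by
  have hderiv : phip p = fun s => p⁻¹ * deriv (fun t : ℝ => ‖t‖ ^ p) s := by
    funext s
    have hp0 : p ≠ 0 := by positivity
    simp only [norm_eq_abs]
    rw [(hasDerivAt_abs_rpow s hp).deriv, phip]
    field_simp
  rw [hderiv]
  exact continuous_const.mul ((contDiff_norm_rpow hp).continuous_deriv le_rfl)

-- `y` itself need not be differentiable, so `|y| ^ p` is differentiated as `|phip p y| ^ q`.
lemma hasDerivAt_abs_rpow_of_phip (hpq : p.HolderConjugate q) {y : ℝ → ℝ} {x w : ℝ}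
    (h : HasDerivAt (fun t => phip p (y t)) w x) :
    HasDerivAt (fun t => |y t| ^ p) (q * y x * w) x := by
  have hcomp := (hasDerivAt_abs_rpow (phip p (y x)) hpq.symm.lt).comp x h
  refine (hcomp.congr_deriv ?_).congr_of_eventuallyEq
    (Eventually.of_forall fun t => (abs_phip_rpow hpq (y t)).symm)
  rw [mul_assoc q, ← phip, phip_phip hpq]

end PhiP

section Calculus

lemma hasDerivAt_of_pow_mul {n : ℕ} {w : ℝ → ℝ} {x c : ℝ} (hx : x ≠ 0)
    (h : HasDerivAt (fun t => t ^ n * w t) (x ^ n * c) x) :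
    HasDerivAt w (c - n / x * w x) x := by
  have hdiv := h.div (hasDerivAt_pow n x) (pow_ne_zero n hx)
  refine (hdiv.congr_deriv ?_).congr_of_eventuallyEq ?_
  · rcases n with _ | n
    · simp
    · field_simp
      push_cast
      ring
  · filter_upwards [isOpen_ne.mem_nhds hx] with t ht
    exact (mul_div_cancel_left₀ (w t) (pow_ne_zero n ht)).symm

lemma sub_le_sub_of_hasDerivAt_le {φ φ' ψ ψ' : ℝ → ℝ} {b c : ℝ} (hbc : b ≤ c)
    (hφ : ContinuousOn φ (Icc b c)) (hψ : ContinuousOn ψ (Icc b c))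
    (hφ' : ∀ x ∈ Ioo b c, HasDerivAt φ (φ' x) x) (hψ' : ∀ x ∈ Ioo b c, HasDerivAt ψ (ψ' x) x)
    (hle : ∀ x ∈ Ioo b c, φ' x ≤ ψ' x) : φ c - φ b ≤ ψ c - ψ b := by
  have hmono : MonotoneOn (ψ - φ) (Icc b c) := by
    refine monotoneOn_of_hasDerivWithinAt_nonneg (f' := ψ' - φ') (convex_Icc b c) (hψ.sub hφ) ?_ ?_
    · rw [interior_Icc]
      exact fun x hx => ((hψ' x hx).sub (hφ' x hx)).hasDerivWithinAt
    · rw [interior_Icc]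
      exact fun x hx => sub_nonneg.mpr (hle x hx)
  have hends := hmono (left_mem_Icc.mpr hbc) (right_mem_Icc.mpr hbc) hbc
  simp only [Pi.sub_apply] at hends
  linarith

lemma le_mul_div_rpow_of_mul_deriv_le {F g : ℝ → ℝ} {L s₀ s : ℝ} (hs₀ : 0 < s₀) (hs : s₀ ≤ s)
    (hF : ∀ t, s₀ ≤ t → HasDerivAt F (g t) t) (hg : ∀ t, s₀ ≤ t → g t * t ≤ L * F t) :
    F s ≤ F s₀ * (s / s₀) ^ L := by
  have hderiv : ∀ t, s₀ ≤ t →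
      HasDerivAt (fun t => F t * t ^ (-L)) (g t * t ^ (-L) + F t * (-L * t ^ (-L - 1))) t :=
    fun t ht => (hF t ht).mul (hasDerivAt_rpow_const (Or.inl (hs₀.trans_le ht).ne'))
  have hdecr := sub_le_sub_of_hasDerivAt_le (ψ := fun _ => 0) (ψ' := fun _ => 0) hs
    (fun t ht => (hderiv t ht.1).continuousAt.continuousWithinAt) continuousOn_const
    (fun t ht => hderiv t ht.1.le) (fun t _ => hasDerivAt_const t 0) fun t ht => by
      have ht0 : 0 < t := hs₀.trans ht.1
      have hsplit : t ^ (-L) = t ^ (-L - 1) * t := by rw [← rpow_add_one ht0.ne']; ring_nf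
      calc g t * t ^ (-L) + F t * (-L * t ^ (-L - 1))
          = t ^ (-L - 1) * (g t * t - L * F t) := by rw [hsplit]; ring
        _ ≤ 0 := mul_nonpos_of_nonneg_of_nonpos (by positivity) (sub_nonpos.mpr (hg t ht.1.le))
  have hs0 : 0 < s := hs₀.trans_le hs
  calc F s = F s * s ^ (-L) * s ^ L := by
        rw [mul_assoc, ← rpow_add hs0, neg_add_cancel, rpow_zero, mul_one]
    _ ≤ F s₀ * s₀ ^ (-L) * s ^ L :=
        mul_le_mul_of_nonneg_right (by linarith) (rpow_nonneg hs0.le L)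
    _ = F s₀ * (s / s₀) ^ L := by
        rw [div_rpow hs0.le hs₀.le, rpow_neg hs₀.le]; ring

lemma exists_first_eq {u : ℝ → ℝ} {a b c : ℝ} (hab : a ≤ b) (hu : ContinuousOn u (Icc a b))
    (ha : c < u a) (hb : u b ≤ c) : ∃ r ∈ Ioc a b, u r = c ∧ ∀ t ∈ Icc a r, c ≤ u t := by
  have hclosed : IsClosed (Icc a b ∩ u ⁻¹' {c}) :=
    hu.preimage_isClosed_of_isClosed isClosed_Icc isClosed_singleton
  have hne : (Icc a b ∩ u ⁻¹' {c}).Nonempty := intermediate_value_Icc' hab hu ⟨hb, ha.le⟩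
  obtain ⟨r, ⟨hr, hrc : u r = c⟩, hmin⟩ :=
    (isCompact_Icc.of_isClosed_subset hclosed inter_subset_left).exists_isLeast hne
  have har : a ≠ r := by
    rintro rfl
    exact ha.ne' hrc
  refine ⟨r, ⟨hr.1.lt_of_ne har, hr.2⟩, hrc, fun t ht => ?_⟩
  by_contra! htc
  obtain ⟨z, hz, hzc⟩ := intermediate_value_Icc' ht.1
    (hu.mono (Icc_subset_Icc_right (ht.2.trans hr.2))) ⟨htc.le, ha.le⟩
  have hrt : r ≤ t := (hmin ⟨⟨hz.1, hz.2.trans (ht.2.trans hr.2)⟩, hzc⟩).trans hz.2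
  exact htc.ne (le_antisymm ht.2 hrt ▸ hrc)

lemma mul_rpow_le_mul_rpow_of_le_mul_rpow {p a L κ A d r Φ : ℝ} (ha : 0 ≤ a) (hκ : 0 ≤ κ)
    (hA : 0 ≤ A) (hd : 0 < d) (hr : 0 ≤ r) (hΦ : 0 < Φ) (hlow : κ * d ^ p ≤ Φ * r ^ p)
    (hup : Φ ≤ A * d ^ L) :
    κ ^ (1 + a) * A ^ (-a) * d ^ (p * (1 + a) - a * L) ≤ Φ * r ^ (p * (1 + a)) := by
  have hlow' : κ ^ (1 + a) * d ^ (p * (1 + a)) ≤ Φ ^ (1 + a) * r ^ (p * (1 + a)) := by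
    have h := rpow_le_rpow (by positivity) hlow (by linarith : 0 ≤ 1 + a)
    rwa [mul_rpow hκ (by positivity), mul_rpow hΦ.le (by positivity), ← rpow_mul hd.le,
      ← rpow_mul hr] at h
  have hup' : A ^ (-a) * d ^ (-(a * L)) ≤ Φ ^ (-a) := by
    have h := rpow_le_rpow_of_nonpos hΦ hup (neg_nonpos.mpr ha)
    rwa [mul_rpow hA (by positivity), ← rpow_mul hd.le, mul_neg, mul_comm L] at h
  calc κ ^ (1 + a) * A ^ (-a) * d ^ (p * (1 + a) - a * L)
      = κ ^ (1 + a) * d ^ (p * (1 + a)) * (A ^ (-a) * d ^ (-(a * L))) := by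
        rw [sub_eq_add_neg, rpow_add hd]; ring
    _ ≤ Φ ^ (1 + a) * r ^ (p * (1 + a)) * Φ ^ (-a) := by gcongr
    _ = Φ ^ (1 + a + -a) * r ^ (p * (1 + a)) := by rw [mul_right_comm, ← rpow_add hΦ]
    _ = Φ * r ^ (p * (1 + a)) := by rw [add_neg_cancel_right, rpow_one]

end Calculus

namespace CauchySol

section Basic

variable {p : ℝ} {N : ℕ} {R₁ R₂ : ℝ} {g u : ℝ → ℝ} {d : ℝ}

lemma hasDerivAt (h : CauchySol p N R₁ R₂ g u d) {x : ℝ} (hx : x ∈ Icc R₁ R₂) :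
    HasDerivAt u (deriv u x) x :=
  (h.1 x hx).hasDerivAt

lemma continuousOn (h : CauchySol p N R₁ R₂ g u d) : ContinuousOn u (Icc R₁ R₂) :=
  fun _ hx => (h.hasDerivAt hx).continuousAt.continuousWithinAt

lemma continuousOn_deriv (h : CauchySol p N R₁ R₂ g u d) : ContinuousOn (deriv u) (Icc R₁ R₂) :=
  h.2.1

lemma apply_left (h : CauchySol p N R₁ R₂ g u d) : u R₁ = d := h.2.2.1

lemma deriv_left (h : CauchySol p N R₁ R₂ g u d) : deriv u R₁ = 0 := h.2.2.2.1

lemma continuousOn_flux (h : CauchySol p N R₁ R₂ g u d) :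
    ContinuousOn (fun t => t ^ (N - 1) * phip p (deriv u t)) (Icc R₁ R₂) :=
  h.2.2.2.2.1

lemma flux_left (h : CauchySol p N R₁ R₂ g u d) : R₁ ^ (N - 1) * phip p (deriv u R₁) = 0 := by
  simp [h.deriv_left, phip]

lemma hasDerivAt_flux (h : CauchySol p N R₁ R₂ g u d) {x : ℝ} (hx : x ∈ Ioc R₁ R₂) :
    HasDerivAt (fun t => t ^ (N - 1) * phip p (deriv u t)) (-(x ^ (N - 1)) * g (u x)) x :=
  h.2.2.2.2.2 x hx

lemma mono (h : CauchySol p N R₁ R₂ g u d) {r : ℝ} (hr : r ≤ R₂) : CauchySol p N R₁ r g u d :=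
  have hsub : Icc R₁ r ⊆ Icc R₁ R₂ := Icc_subset_Icc_right hr
  ⟨fun x hx => h.1 x (hsub hx), h.continuousOn_deriv.mono hsub, h.apply_left, h.deriv_left,
    h.continuousOn_flux.mono hsub, fun _ hx => h.hasDerivAt_flux ⟨hx.1, hx.2.trans hr⟩⟩

lemma deriv_nonpos (h : CauchySol p N R₁ R₂ g u d) (hR₁ : 0 ≤ R₁)
    (hg : ∀ x ∈ Ioo R₁ R₂, 0 ≤ g (u x)) {x : ℝ} (hx : x ∈ Icc R₁ R₂) : deriv u x ≤ 0 := by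
  rcases hx.1.eq_or_lt with rfl | hlt
  · exact h.deriv_left.le
  have hflux := sub_le_sub_of_hasDerivAt_le (ψ := fun _ => 0) (ψ' := fun _ => 0) hx.1
    (h.mono hx.2).continuousOn_flux continuousOn_const
    (fun t ht => (h.mono hx.2).hasDerivAt_flux ⟨ht.1, ht.2.le⟩) (fun t _ => hasDerivAt_const t 0)
    fun t ht => mul_nonpos_of_nonpos_of_nonneg
      (neg_nonpos.mpr (pow_nonneg (hR₁.trans ht.1.le) _)) (hg t ⟨ht.1, ht.2.trans_le hx.2⟩)
  rw [h.flux_left, sub_zero, sub_zero] at hflux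
  exact phip_nonpos_iff.mp (nonpos_of_mul_nonpos_right hflux (pow_pos (hR₁.trans_lt hlt) _))

lemma antitoneOn (h : CauchySol p N R₁ R₂ g u d) (hR₁ : 0 ≤ R₁)
    (hg : ∀ x ∈ Ioo R₁ R₂, 0 ≤ g (u x)) : AntitoneOn u (Icc R₁ R₂) :=
  antitoneOn_of_deriv_nonpos (convex_Icc R₁ R₂) h.continuousOn
    (fun _ hx => (h.hasDerivAt (interior_subset hx)).differentiableAt.differentiableWithinAt)
    fun _ hx => h.deriv_nonpos hR₁ hg (interior_subset hx)

end Basic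

variable {p : ℝ} {n : ℕ} {R : ℝ} {g u : ℝ → ℝ} {d K : ℝ}

lemma abs_deriv_rpow_le (hp : 1 < p) (h : CauchySol p (n + 1) 0 R g u d)
    (hg : ∀ x ∈ Ioo 0 R, 0 ≤ g (u x)) (hK : ∀ x ∈ Ioo 0 R, g (u x) ≤ K) {x : ℝ}
    (hx : x ∈ Ioo 0 R) : |deriv u x| ^ (p - 1) ≤ K / (n + 1) * x := by
  have hflux := sub_le_sub_of_hasDerivAt_le (φ := fun t => -(K / (n + 1) * t ^ (n + 1)))
    hx.1.le (by fun_prop) (h.mono hx.2.le).continuousOn_flux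
    (fun t _ => ((hasDerivAt_pow (n + 1) t).const_mul (K / (n + 1))).neg)
    (fun t ht => h.hasDerivAt_flux ⟨ht.1, (ht.2.trans hx.2).le⟩) fun t ht => by
      have hgK := mul_le_mul_of_nonneg_left (hK t ⟨ht.1, ht.2.trans hx.2⟩) (pow_nonneg ht.1.le n)
      calc -(K / (n + 1) * (((n + 1 : ℕ) : ℝ) * t ^ (n + 1 - 1))) = -(t ^ n * K) := by
            rw [Nat.add_sub_cancel]; push_cast; field_simp
        _ ≤ -(t ^ (n + 1 - 1)) * g (u t) := by rw [Nat.add_sub_cancel]; linarith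
  rw [h.flux_left, zero_pow n.succ_ne_zero, Nat.add_sub_cancel, mul_zero, neg_zero, sub_zero,
    sub_zero] at hflux
  have hscaled : x ^ n * (-phip p (deriv u x)) ≤ x ^ n * (K / (n + 1) * x) :=
    calc x ^ n * (-phip p (deriv u x)) ≤ K / (n + 1) * x ^ (n + 1) := by linarith
      _ = x ^ n * (K / (n + 1) * x) := by ring
  rw [← abs_phip hp.ne',
    abs_of_nonpos (phip_nonpos_iff.mpr (h.deriv_nonpos le_rfl hg ⟨hx.1.le, hx.2.le⟩))]
  exact le_of_mul_le_mul_left hscaled (pow_pos hx.1 n)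

lemma sub_rpow_le (hp : 1 < p) (h : CauchySol p (n + 1) 0 R g u d) (hR : 0 < R)
    (hg : ∀ x ∈ Ioo 0 R, 0 ≤ g (u x)) (hK : ∀ x ∈ Ioo 0 R, g (u x) ≤ K) :
    (d - u R) ^ (p - 1) ≤ K / (n + 1) * R ^ p := by
  obtain ⟨ξ, hξ, hslope⟩ := exists_hasDerivAt_eq_slope u (deriv u) hR h.continuousOn
    fun x hx => h.hasDerivAt ⟨hx.1.le, hx.2.le⟩
  have hdrop : d - u R = |deriv u ξ| * R := by
    rw [abs_of_nonpos (h.deriv_nonpos le_rfl hg ⟨hξ.1.le, hξ.2.le⟩), hslope,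
      h.apply_left, sub_zero, neg_mul, div_mul_cancel₀ _ hR.ne', neg_sub]
  have hK0 : 0 ≤ K := (hg ξ hξ).trans (hK ξ hξ)
  calc (d - u R) ^ (p - 1) = |deriv u ξ| ^ (p - 1) * R ^ (p - 1) := by
        rw [hdrop, mul_rpow (abs_nonneg _) hR.le]
    _ ≤ K / (n + 1) * R * R ^ (p - 1) := by
        gcongr
        exact (h.abs_deriv_rpow_le hp hg hK hξ).trans (by gcongr; exact hξ.2.le)
    _ = K / (n + 1) * R ^ p := by
        rw [mul_assoc, mul_comm R, ← rpow_add_one hR.ne', sub_add_cancel]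

end CauchySol

section Potential

variable {f : ℝ → ℝ}

lemma continuous_fhat (hf : ContinuousOn f (Ici 0)) (hf0 : f 0 = 0) : Continuous (fhat f) := by
  have hmax : fhat f = fun s => f (max s 0) := by
    funext s
    rcases le_total 0 s with hs | hs
    · rw [fhat, if_pos hs, max_eq_left hs]
    · rw [max_eq_right hs, fhat, hf0, ite_eq_right_iff]
      exact fun hs' => le_antisymm hs hs' ▸ hf0
  rw [hmax]
  exact hf.comp_continuous (by fun_prop) fun s => le_max_right s 0

lemma fhat_of_nonneg {s : ℝ} (hs : 0 ≤ s) : fhat f s = f s := if_pos hs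

lemma hasDerivAt_Fhat (hf : Continuous (fhat f)) (s : ℝ) : HasDerivAt (Fhat f) (fhat f s) s :=
  (hf.integral_hasStrictDerivAt 1 s).hasDerivAt

lemma continuous_Fhat (hf : Continuous (fhat f)) : Continuous (Fhat f) :=
  continuous_iff_continuousAt.mpr fun s => (hasDerivAt_Fhat hf s).continuousAt

lemma monotoneOn_Fhat (hf : Continuous (fhat f)) (hpos : ∀ s, 1 < s → 0 < fhat f s) :
    MonotoneOn (Fhat f) (Ici 1) := by
  refine monotoneOn_of_hasDerivWithinAt_nonneg (convex_Ici 1) (continuous_Fhat hf).continuousOn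
    (fun s _ => (hasDerivAt_Fhat hf s).hasDerivWithinAt) fun s hs => ?_
  rw [interior_Ici] at hs
  exact (hpos s hs).le

lemma Fhat_pos (hf : Continuous (fhat f)) (hpos : ∀ s, 1 < s → 0 < fhat f s) {s : ℝ}
    (hs : 1 < s) : 0 < Fhat f s :=
  intervalIntegral.intervalIntegral_pos_of_pos_on (hf.intervalIntegrable 1 s)
    (fun t ht => hpos t ht.1) hs

lemma Fhat_eq_Fint {s : ℝ} (hs : 0 ≤ s) : Fhat f s = Fint f s :=
  intervalIntegral.integral_congr fun _ ht => fhat_of_nonneg ((le_min zero_le_one hs).trans ht.1)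

lemma fhat_le_fstar (hf : Continuous (fhat f)) {s σ : ℝ} (hσ : σ ∈ Icc 1 s) :
    fhat f σ ≤ fstar f s := by
  have himage : f '' Icc 1 s = fhat f '' Icc 1 s :=
    image_congr fun t ht => (fhat_of_nonneg (zero_le_one.trans ht.1)).symm
  rw [fstar, himage]
  exact le_csSup (isCompact_Icc.image hf).bddAbove (mem_image_of_mem _ hσ)

end Potential

section Pohozaev

variable {p a : ℝ} {n : ℕ} {f u : ℝ → ℝ} {R d : ℝ}

/-- The Pohozaev functional of `u` in dimension `n + 1`: the energy combined with `u` times the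
flux, where `a` is a free coefficient. -/
noncomputable def pohozaev (p a : ℝ) (n : ℕ) (f u : ℝ → ℝ) (t : ℝ) : ℝ :=
  t ^ (n + 1) * energy p f u t + a * (t ^ n * phip p (deriv u t) * u t)

/-- The zeroth-order part of the derivative of the Pohozaev functional in dimension `n + 1`, as a
function of the value `s` of `u`; the weight `t ^ n` is factored out. -/
noncomputable def pohozaevDensity (a : ℝ) (n : ℕ) (f : ℝ → ℝ) (s : ℝ) : ℝ :=
  (n + 1) * Fhat f s - a * (s * fhat f s)

lemma continuous_pohozaevDensity (hf : Continuous (fhat f)) :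
    Continuous (pohozaevDensity a n f) :=
  (continuous_const.mul (continuous_Fhat hf)).sub
    (continuous_const.mul (continuous_id.mul hf))

lemma continuous_pohozaev_uncurried (hp : 1 < p) (hf : Continuous (fhat f)) :
    Continuous fun z : ℝ × ℝ × ℝ => z.1 ^ (n + 1) *
      (|z.2.2| ^ p / (p / (p - 1)) + Fhat f z.2.1) + a * (z.1 ^ n * phip p z.2.2 * z.2.1) := by
  have hpow : Continuous fun v : ℝ => |v| ^ p :=
    continuous_abs.rpow_const fun _ => Or.inr (by linarith)
  have hphip := continuous_phip hp
  have hF := continuous_Fhat hf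
  exact (continuous_fst.pow _).mul (((hpow.comp continuous_snd.snd).div_const _).add
    (hF.comp continuous_snd.fst)) |>.add (by fun_prop)

lemma exists_forall_pohozaev_le (hp : 1 < p) (hf : Continuous (fhat f)) (R M : ℝ) :
    ∃ T, ∀ (u : ℝ → ℝ) (x : ℝ), x ∈ Icc 0 R → u x ∈ Icc 0 M → |deriv u x| ≤ M →
      pohozaev p a n f u x ≤ T := by
  obtain ⟨T, hT⟩ := (isCompact_Icc.prod (isCompact_Icc.prod isCompact_Icc)).bddAbove_image
    (K := Icc 0 R ×ˢ Icc 0 M ×ˢ Icc (-M) M)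
    (continuous_pohozaev_uncurried (a := a) (n := n) hp hf).continuousOn
  exact ⟨T, fun u x hx hu hderiv =>
    hT ⟨(x, u x, deriv u x), ⟨hx, hu, abs_le.mp hderiv⟩, rfl⟩⟩

namespace CauchySol

lemma hasDerivAt_energy (hp : 1 < p) (hf : Continuous (fhat f))
    (h : CauchySol p (n + 1) 0 R (fhat f) u d) {x : ℝ} (hx : x ∈ Ioc 0 R) :
    HasDerivAt (energy p f u) (-(n / x) * |deriv u x| ^ p) x := by
  have hflux : HasDerivAt (fun t => t ^ n * phip p (deriv u t)) (x ^ n * -fhat f (u x)) x :=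
    (h.hasDerivAt_flux hx).congr_deriv (by rw [Nat.add_sub_cancel]; ring)
  have hkin := (hasDerivAt_abs_rpow_of_phip (HolderConjugate.conjExponent hp)
    (hasDerivAt_of_pow_mul hx.1.ne' hflux)).div_const (p / (p - 1))
  have hpot := (hasDerivAt_Fhat hf (u x)).comp x (h.hasDerivAt ⟨hx.1.le, hx.2⟩)
  refine (hkin.add hpot).congr_deriv ?_
  have hp0 : p ≠ 0 := by positivity
  have hp1 : p - 1 ≠ 0 := sub_ne_zero.mpr hp.ne'
  rw [← mul_phip hp0, conjExponent]
  field_simp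
  ring

lemma hasDerivAt_pohozaev (hp : 1 < p) (hf : Continuous (fhat f))
    (h : CauchySol p (n + 1) 0 R (fhat f) u d) {x : ℝ} (hx : x ∈ Ioc 0 R) :
    HasDerivAt (pohozaev p a n f u)
      (x ^ n * (pohozaevDensity a n f (u x) + (1 - (n + 1) / p + a) * |deriv u x| ^ p)) x := by
  have henergy := (hasDerivAt_pow (n + 1) x).mul (h.hasDerivAt_energy hp hf hx)
  have hflux := ((h.hasDerivAt_flux hx).mul (h.hasDerivAt ⟨hx.1.le, hx.2⟩)).const_mul a
  refine (henergy.add hflux).congr_deriv ?_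
  have hp0 : p ≠ 0 := by positivity
  have hx0 : x ≠ 0 := hx.1.ne'
  rw [pohozaevDensity, energy, ← mul_phip hp0, Nat.add_sub_cancel]
  push_cast
  field_simp
  ring

lemma continuousOn_pohozaev (hp : 1 < p) (hf : Continuous (fhat f))
    (h : CauchySol p (n + 1) 0 R (fhat f) u d) :
    ContinuousOn (pohozaev p a n f u) (Icc 0 R) :=
  (continuous_pohozaev_uncurried hp hf).comp_continuousOn
    (continuousOn_id.prodMk (h.continuousOn.prodMk h.continuousOn_deriv))

lemma pohozaev_zero (h : CauchySol p (n + 1) 0 R (fhat f) u d) : pohozaev p a n f u 0 = 0 := by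
  simp [pohozaev, phip, h.deriv_left]

lemma mul_pow_sub_pow_le_pohozaev_sub (hp : 1 < p) (hf : Continuous (fhat f))
    (h : CauchySol p (n + 1) 0 R (fhat f) u d) (ha : n + 1 ≤ p * (1 + a)) {r x C : ℝ}
    (hr : 0 ≤ r) (hrx : r ≤ x) (hxR : x ≤ R) (hC : ∀ t ∈ Ioo r x, C ≤ pohozaevDensity a n f (u t)) :
    C / (n + 1) * (x ^ (n + 1) - r ^ (n + 1)) ≤
      pohozaev p a n f u x - pohozaev p a n f u r := by
  have hcoef : 0 ≤ 1 - (n + 1) / p + a := by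
    have hle : (n + 1) / p ≤ 1 + a := (div_le_iff₀' (by positivity)).mpr ha
    linarith
  have hgrow := sub_le_sub_of_hasDerivAt_le (φ := fun t => C / (n + 1) * t ^ (n + 1)) hrx
    (by fun_prop) ((h.continuousOn_pohozaev hp hf).mono (Icc_subset_Icc hr hxR))
    (fun t _ => (hasDerivAt_pow (n + 1) t).const_mul _)
    (fun t ht => h.hasDerivAt_pohozaev (a := a) hp hf ⟨hr.trans_lt ht.1, ht.2.le.trans hxR⟩)
    fun t ht => by
      have ht0 : 0 ≤ t := hr.trans ht.1.le
      calc C / (n + 1) * (((n + 1 : ℕ) : ℝ) * t ^ (n + 1 - 1)) = t ^ n * (C + 0) := by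
            rw [Nat.add_sub_cancel]; push_cast; field_simp; ring
        _ ≤ t ^ n * (pohozaevDensity a n f (u t) + (1 - (n + 1) / p + a) * |deriv u t| ^ p) := by
            gcongr
            · exact hC t ht
            · positivity
  rwa [← mul_sub] at hgrow

end CauchySol

end Pohozaev

/-- Quantitative form of the growth part of (f_subc): the quotient `fstar f s * s / Fint f (η * s)`
is at most `L` beyond the threshold `s₀`, with the denominator cleared and `f` extended by zero. -/
structure IsSubcriticalFrom (f : ℝ → ℝ) (η L s₀ : ℝ) : Prop where
  continuous_fhat : Continuous (fhat f)
  fhat_pos : ∀ s, 1 < s → 0 < fhat f s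
  eta_pos : 0 < η
  eta_lt_one : η < 1
  one_lt_eta_mul : 1 < η * s₀
  fstar_mul_le : ∀ s, s₀ ≤ s → fstar f s * s ≤ L * Fhat f (η * s)

lemma exists_isSubcriticalFrom {f : ℝ → ℝ} {η L : ℝ} (hf : ContinuousOn f (Ici 0)) (hf0 : f 0 = 0)
    (hpos : ∀ s, 1 < s → 0 < f s) (hη : 0 < η) (hη1 : η < 1)
    (hL : ∀ᶠ s in atTop, fstar f s * s / Fint f (η * s) ≤ L) :
    ∃ s₀, IsSubcriticalFrom f η L s₀ := by
  obtain ⟨s₀, hs₀⟩ := eventually_atTop.mp (hL.and (eventually_gt_atTop η⁻¹))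
  have hηs : ∀ s, s₀ ≤ s → 1 < η * s := fun s hs => (inv_lt_iff_one_lt_mul₀' hη).mp (hs₀ s hs).2
  have hcont := continuous_fhat hf hf0
  have hpos' : ∀ s, 1 < s → 0 < fhat f s := fun s hs =>
    (fhat_of_nonneg (zero_le_one.trans hs.le)).symm ▸ hpos s hs
  refine ⟨s₀, hcont, hpos', hη, hη1, hηs s₀ le_rfl, fun s hs => ?_⟩
  rw [← div_le_iff₀ (Fhat_pos hcont hpos' (hηs s hs)),
    Fhat_eq_Fint (zero_le_one.trans (hηs s hs).le)]
  exact (hs₀ s hs).1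

namespace IsSubcriticalFrom

variable {f : ℝ → ℝ} {η L s₀ : ℝ}

lemma one_lt_eta_mul_of_le (h : IsSubcriticalFrom f η L s₀) {s : ℝ} (hs : s₀ ≤ s) : 1 < η * s :=
  h.one_lt_eta_mul.trans_le (mul_le_mul_of_nonneg_left hs h.eta_pos.le)

lemma pos (h : IsSubcriticalFrom f η L s₀) {s : ℝ} (hs : s₀ ≤ s) : 0 < s :=
  pos_of_mul_pos_right (zero_lt_one.trans (h.one_lt_eta_mul_of_le hs)) h.eta_pos.le

lemma eta_mul_le (h : IsSubcriticalFrom f η L s₀) {s : ℝ} (hs : s₀ ≤ s) : η * s ≤ s :=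
  mul_le_of_le_one_left (h.pos hs).le h.eta_lt_one.le

lemma one_lt (h : IsSubcriticalFrom f η L s₀) {s : ℝ} (hs : s₀ ≤ s) : 1 < s :=
  (h.one_lt_eta_mul_of_le hs).trans_le (h.eta_mul_le hs)

lemma Fhat_eta_mul_pos (h : IsSubcriticalFrom f η L s₀) {s : ℝ} (hs : s₀ ≤ s) :
    0 < Fhat f (η * s) :=
  Fhat_pos h.continuous_fhat h.fhat_pos (h.one_lt_eta_mul_of_le hs)

lemma Fhat_le_Fhat (h : IsSubcriticalFrom f η L s₀) {s σ : ℝ} (hs : s₀ ≤ s) (hσ : η * s ≤ σ) :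
    Fhat f (η * s) ≤ Fhat f σ :=
  have hone : 1 ≤ η * s := (h.one_lt_eta_mul_of_le hs).le
  monotoneOn_Fhat h.continuous_fhat h.fhat_pos hone (hone.trans hσ) hσ

lemma fhat_nonneg (h : IsSubcriticalFrom f η L s₀) {s σ : ℝ} (hs : s₀ ≤ s) (hσ : η * s ≤ σ) :
    0 ≤ fhat f σ :=
  (h.fhat_pos σ ((h.one_lt_eta_mul_of_le hs).trans_le hσ)).le

lemma fhat_le_fstar (h : IsSubcriticalFrom f η L s₀) {s σ : ℝ} (hs : s₀ ≤ s)
    (hσ : σ ∈ Icc (η * s) s) : fhat f σ ≤ fstar f s :=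
  _root_.fhat_le_fstar h.continuous_fhat ⟨(h.one_lt_eta_mul_of_le hs).le.trans hσ.1, hσ.2⟩

lemma mul_fhat_le (h : IsSubcriticalFrom f η L s₀) {s σ : ℝ} (hs : s₀ ≤ s)
    (hσ : σ ∈ Icc (η * s) s) : σ * fhat f σ ≤ L * Fhat f (η * s) :=
  calc σ * fhat f σ ≤ s * fstar f s :=
        mul_le_mul hσ.2 (h.fhat_le_fstar hs hσ) (h.fhat_nonneg hs hσ.1) (h.pos hs).le
    _ ≤ L * Fhat f (η * s) := (mul_comm _ _).trans_le (h.fstar_mul_le s hs)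

lemma L_pos (h : IsSubcriticalFrom f η L s₀) : 0 < L := by
  have hlower : 0 < s₀ * fhat f s₀ := mul_pos (h.pos le_rfl) (h.fhat_pos s₀ (h.one_lt le_rfl))
  exact pos_of_mul_pos_left
    (hlower.trans_le (h.mul_fhat_le le_rfl ⟨h.eta_mul_le le_rfl, le_rfl⟩))
    (h.Fhat_eta_mul_pos le_rfl).le

lemma exists_Fhat_le_mul_rpow (h : IsSubcriticalFrom f η L s₀) :
    ∃ A, 0 < A ∧ ∀ s, s₀ ≤ s → Fhat f (η * s) ≤ A * s ^ L := by
  have hs₀ : 0 < s₀ := h.pos le_rfl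
  have hF₀ : 0 < Fhat f s₀ := Fhat_pos h.continuous_fhat h.fhat_pos (h.one_lt le_rfl)
  refine ⟨Fhat f s₀ / s₀ ^ L, by positivity, fun s hs => ?_⟩
  have hode : ∀ t, s₀ ≤ t → fhat f t * t ≤ L * Fhat f t := fun t ht =>
    calc fhat f t * t ≤ L * Fhat f (η * t) :=
          (mul_comm _ _).trans_le (h.mul_fhat_le ht ⟨h.eta_mul_le ht, le_rfl⟩)
      _ ≤ L * Fhat f t :=
          mul_le_mul_of_nonneg_left (h.Fhat_le_Fhat ht (h.eta_mul_le ht)) h.L_pos.le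
  calc Fhat f (η * s) ≤ Fhat f s := h.Fhat_le_Fhat hs (h.eta_mul_le hs)
    _ ≤ Fhat f s₀ * (s / s₀) ^ L := le_mul_div_rpow_of_mul_deriv_le hs₀ hs
        (fun t _ => hasDerivAt_Fhat h.continuous_fhat t) hode
    _ = Fhat f s₀ / s₀ ^ L * s ^ L := by rw [div_rpow (h.pos hs).le hs₀.le]; ring

variable {p a : ℝ} {n : ℕ}

lemma mul_Fhat_le_pohozaevDensity (h : IsSubcriticalFrom f η L s₀) (ha : 0 ≤ a) {s σ : ℝ}
    (hs : s₀ ≤ s) (hσ : σ ∈ Icc (η * s) s) :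
    (n + 1 - a * L) * Fhat f (η * s) ≤ pohozaevDensity a n f σ :=
  calc (n + 1 - a * L) * Fhat f (η * s)
      = (n + 1) * Fhat f (η * s) - a * (L * Fhat f (η * s)) := by ring
    _ ≤ (n + 1) * Fhat f σ - a * (σ * fhat f σ) :=
        sub_le_sub (mul_le_mul_of_nonneg_left (h.Fhat_le_Fhat hs hσ.1) (by positivity))
          (mul_le_mul_of_nonneg_left (h.mul_fhat_le hs hσ) ha)

lemma exists_neg_le_pohozaevDensity (h : IsSubcriticalFrom f η L s₀) (ha : 0 ≤ a)
    (haL : a * L ≤ n + 1) : ∃ C, 0 ≤ C ∧ ∀ s, 0 ≤ s → -C ≤ pohozaevDensity a n f s := by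
  obtain ⟨C, hC⟩ := (isCompact_Icc (a := 0) (b := s₀)).exists_bound_of_continuousOn
    (continuous_pohozaevDensity (a := a) (n := n) h.continuous_fhat).continuousOn
  refine ⟨|C|, abs_nonneg C, fun s hs => ?_⟩
  rcases le_total s s₀ with hss₀ | hss₀
  · exact (abs_le.mp ((hC s ⟨hs, hss₀⟩).trans (le_abs_self C))).1
  · calc -|C| ≤ 0 := neg_nonpos.mpr (abs_nonneg C)
      _ ≤ (n + 1 - a * L) * Fhat f (η * s) :=
          mul_nonneg (sub_nonneg.mpr haL) (h.Fhat_eta_mul_pos hss₀).le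
      _ ≤ pohozaevDensity a n f s :=
          h.mul_Fhat_le_pohozaevDensity ha hss₀ ⟨h.eta_mul_le hss₀, le_rfl⟩

end IsSubcriticalFrom

namespace CauchySol

variable {p a : ℝ} {n : ℕ} {f u : ℝ → ℝ} {η L s₀ R d r : ℝ}

lemma mem_Icc_of_eta_mul_le (hf : IsSubcriticalFrom f η L s₀)
    (h : CauchySol p (n + 1) 0 r (fhat f) u d) (hd : s₀ ≤ d) (hu : ∀ t ∈ Icc 0 r, η * d ≤ u t)
    {t : ℝ} (ht : t ∈ Icc 0 r) : u t ∈ Icc (η * d) d := by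
  have hanti := h.antitoneOn le_rfl fun t ht => hf.fhat_nonneg hd (hu t ⟨ht.1.le, ht.2.le⟩)
  exact ⟨hu t ht, (hanti ⟨le_rfl, ht.1.trans ht.2⟩ ht ht.1).trans_eq h.apply_left⟩

lemma mul_rpow_le_Fhat_mul_rpow (hp : 1 < p) (hf : IsSubcriticalFrom f η L s₀)
    (h : CauchySol p (n + 1) 0 r (fhat f) u d) (hr : 0 < r) (hd : s₀ ≤ d) (hur : u r = η * d)
    (hu : ∀ t ∈ Icc 0 r, η * d ≤ u t) :
    (n + 1) * (1 - η) ^ (p - 1) / L * d ^ p ≤ Fhat f (η * d) * r ^ p := by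
  have hd0 : 0 < d := hf.pos hd
  have hη1 : 0 ≤ 1 - η := sub_nonneg.mpr hf.eta_lt_one.le
  have hL : 0 < L := hf.L_pos
  have hrange : ∀ t ∈ Ioo 0 r, u t ∈ Icc (η * d) d := fun t ht =>
    h.mem_Icc_of_eta_mul_le hf hd hu ⟨ht.1.le, ht.2.le⟩
  have hdrop : (d - u r) ^ (p - 1) ≤ fstar f d / (n + 1) * r ^ p :=
    h.sub_rpow_le hp hr (fun t ht => hf.fhat_nonneg hd (hrange t ht).1)
      fun t ht => hf.fhat_le_fstar hd (hrange t ht)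
  have hexpand : (1 - η) ^ (p - 1) * d ^ p = (d - u r) ^ (p - 1) * d := by
    rw [hur, ← one_sub_mul, mul_rpow hη1 hd0.le, mul_assoc, ← rpow_add_one hd0.ne',
      sub_add_cancel]
  calc (n + 1) * (1 - η) ^ (p - 1) / L * d ^ p
      = (n + 1) / L * ((d - u r) ^ (p - 1) * d) := by rw [← hexpand]; ring
    _ ≤ (n + 1) / L * (fstar f d / (n + 1) * r ^ p * d) := by gcongr
    _ = fstar f d * d / L * r ^ p := by field_simp
    _ ≤ Fhat f (η * d) * r ^ p := by
        gcongr
        exact (div_le_iff₀' hL).mpr (hf.fstar_mul_le d hd)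

lemma mul_pow_le_pohozaev (hp : 1 < p) (hf : IsSubcriticalFrom f η L s₀) (ha : 0 ≤ a)
    (han : n + 1 ≤ p * (1 + a)) (h : CauchySol p (n + 1) 0 r (fhat f) u d) (hr : 0 ≤ r)
    (hd : s₀ ≤ d) (hu : ∀ t ∈ Icc 0 r, η * d ≤ u t) :
    (n + 1 - a * L) / (n + 1) * (Fhat f (η * d) * r ^ (n + 1)) ≤ pohozaev p a n f u r := by
  have hgrow := h.mul_pow_sub_pow_le_pohozaev_sub hp hf.continuous_fhat han le_rfl hr le_rfl
    fun t ht => hf.mul_Fhat_le_pohozaevDensity ha hd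
      (h.mem_Icc_of_eta_mul_le hf hd hu ⟨ht.1.le, ht.2.le⟩)
  rw [h.pohozaev_zero, zero_pow n.succ_ne_zero, sub_zero, sub_zero] at hgrow
  exact (by ring : _ = _).trans_le hgrow

end CauchySol

lemma exists_mul_rpow_le_pohozaev {p a : ℝ} {n : ℕ} {f : ℝ → ℝ} {η L s₀ R : ℝ} (hp : 1 < p)
    (hf : IsSubcriticalFrom f η L s₀) (hR : 0 < R) (ha : 0 ≤ a) (han : n + 1 ≤ p * (1 + a))
    (haL : a * L < n + 1) :
    ∃ c, 0 < c ∧ ∀ (u : ℝ → ℝ) (d r : ℝ), s₀ ≤ d → r ∈ Ioc 0 R →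
      CauchySol p (n + 1) 0 r (fhat f) u d → u r = η * d → (∀ t ∈ Icc 0 r, η * d ≤ u t) →
      c * d ^ (p * (1 + a) - a * L) ≤ pohozaev p a n f u r := by
  obtain ⟨A, hA, hFA⟩ := hf.exists_Fhat_le_mul_rpow
  have hL : 0 < L := hf.L_pos
  have hη1 : 0 < 1 - η := sub_pos.mpr hf.eta_lt_one
  set κ := (n + 1) * (1 - η) ^ (p - 1) / L
  have hκ : 0 < κ := by positivity
  set θ := p * (1 + a) - (n + 1)
  set b := (n + 1 - a * L) / (n + 1)
  have hb : 0 < b := div_pos (sub_pos.mpr haL) (by positivity)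
  refine ⟨b * (κ ^ (1 + a) * A ^ (-a) / R ^ θ), by positivity, fun u d r hd hr h hur hu => ?_⟩
  have hF := hf.Fhat_eta_mul_pos hd
  have hinterp : κ ^ (1 + a) * A ^ (-a) * d ^ (p * (1 + a) - a * L) ≤
      Fhat f (η * d) * r ^ (p * (1 + a)) :=
    mul_rpow_le_mul_rpow_of_le_mul_rpow ha hκ.le hA.le (hf.pos hd) hr.1.le hF
      (h.mul_rpow_le_Fhat_mul_rpow hp hf hr.1 hd hur hu) (hFA d hd)
  have hradius : r ^ (p * (1 + a)) ≤ R ^ θ * r ^ (n + 1) :=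
    calc r ^ (p * (1 + a)) = r ^ θ * r ^ (n + 1) := by
          rw [← rpow_natCast, ← rpow_add hr.1, Nat.cast_succ, sub_add_cancel]
      _ ≤ R ^ θ * r ^ (n + 1) :=
          mul_le_mul_of_nonneg_right (rpow_le_rpow hr.1.le hr.2 (sub_nonneg.mpr han))
            (pow_nonneg hr.1.le _)
  calc b * (κ ^ (1 + a) * A ^ (-a) / R ^ θ) * d ^ (p * (1 + a) - a * L)
      = b * (κ ^ (1 + a) * A ^ (-a) * d ^ (p * (1 + a) - a * L) / R ^ θ) := by ring
    _ ≤ b * (Fhat f (η * d) * (R ^ θ * r ^ (n + 1)) / R ^ θ) :=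
        mul_le_mul_of_nonneg_left (div_le_div_of_nonneg_right
          (hinterp.trans (mul_le_mul_of_nonneg_left hradius hF.le)) (by positivity)) hb.le
    _ = b * (Fhat f (η * d) * r ^ (n + 1)) := by
        rw [mul_left_comm, mul_div_cancel_left₀ _ (rpow_pos_of_pos hR θ).ne']
    _ ≤ pohozaev p a n f u r := h.mul_pow_le_pohozaev hp hf ha han hr.1.le hd hu

theorem IsSubcriticalFrom.exists_forall_le_add_abs_deriv {p a : ℝ} {n : ℕ} {f : ℝ → ℝ}
    {η L s₀ R : ℝ} (hp : 1 < p) (hf : IsSubcriticalFrom f η L s₀) (hR : 0 < R) (ha : 0 ≤ a)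
    (han : n + 1 ≤ p * (1 + a)) (haL : a * L < n + 1) (M : ℝ) :
    ∃ D, 0 < D ∧ ∀ d, D ≤ d → ∀ u : ℝ → ℝ, CauchySol p (n + 1) 0 R (fhat f) u d →
      ∀ x ∈ Icc 0 R, (∀ t ∈ Icc 0 x, 0 ≤ u t) → M ≤ u x + |deriv u x| := by
  obtain ⟨c, hc, hlow⟩ := exists_mul_rpow_le_pohozaev hp hf hR ha han haL
  obtain ⟨C, hC0, hC⟩ := hf.exists_neg_le_pohozaevDensity ha haL.le
  obtain ⟨T, hT⟩ := exists_forall_pohozaev_le (a := a) (n := n) hp hf.continuous_fhat R M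
  have hlim : Tendsto (fun d : ℝ => c * d ^ (p * (1 + a) - a * L)) atTop atTop :=
    (tendsto_rpow_atTop (by linarith)).const_mul_atTop hc
  obtain ⟨D, hD⟩ := eventually_atTop.mp
    ((hlim.eventually_gt_atTop (T + C / (n + 1) * R ^ (n + 1))).and
      ((eventually_ge_atTop s₀).and (eventually_ge_atTop (M / η))))
  refine ⟨max D 1, by positivity, fun d hd u h x hx hu => ?_⟩
  obtain ⟨hdT, hds₀, hdM⟩ := hD d ((le_max_left _ _).trans hd)
  rw [div_le_iff₀' hf.eta_pos] at hdM
  by_contra! hlt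
  have hux : 0 ≤ u x := hu x ⟨hx.1, le_rfl⟩
  have hstart : η * d < u 0 := by
    rw [h.apply_left]
    exact mul_lt_of_lt_one_left (hf.pos hds₀) hf.eta_lt_one
  obtain ⟨r, hr, hur, hur'⟩ := exists_first_eq hx.1 (h.mono hx.2).continuousOn hstart
    (by linarith [abs_nonneg (deriv u x)])
  have hrR : r ≤ R := hr.2.trans hx.2
  have hPr := hlow u d r hds₀ ⟨hr.1, hrR⟩ (h.mono hrR) hur hur'
  have hPx := hT u x hx ⟨hux, by linarith [abs_nonneg (deriv u x)]⟩ (by linarith)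
  have hloss := h.mul_pow_sub_pow_le_pohozaev_sub hp hf.continuous_fhat han hr.1.le hr.2 hx.2
    fun t ht => hC (u t) (hu t ⟨hr.1.le.trans ht.1.le, ht.2.le⟩)
  have hloss_le : C / (n + 1) * (x ^ (n + 1) - r ^ (n + 1)) ≤ C / (n + 1) * R ^ (n + 1) := by
    gcongr
    linarith [pow_le_pow_left₀ hx.1 hx.2 (n + 1), pow_nonneg hr.1.le (n + 1)]
  rw [neg_div, neg_mul] at hloss
  linarith

lemma exists_pohozaev_coefficient {p L : ℝ} {N : ℕ} (hp : 0 < p) (hN : 0 < N)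
    (hL : (L : EReal) < pstar p N) : ∃ a : ℝ, 0 ≤ a ∧ N ≤ p * (1 + a) ∧ a * L < N := by
  unfold pstar at hL
  split_ifs at hL with hpN
  · have hsub : 0 < (N : ℝ) - p := sub_pos.mpr hpN
    refine ⟨(N - p) / p, by positivity, le_of_eq (by field_simp; ring), ?_⟩
    rw [EReal.coe_lt_coe_iff, lt_div_iff₀ hsub] at hL
    rw [div_mul_eq_mul_div, div_lt_iff₀ hp]
    linarith
  · exact ⟨0, le_rfl, by linarith, by simpa using hN⟩

section FirstZero

variable {R₁ R₂ t : ℝ} {u : ℝ → ℝ}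

lemma rOne_le (hR : 0 ≤ R₂) : rOne R₁ R₂ u ≤ R₂ := Real.sSup_le (fun _ hx => hx.1.2) hR

lemma pos_of_lt_rOne (hR : R₁ ≤ R₂) (ht : t ∈ Ico R₁ (rOne R₁ R₂ u)) : 0 < u t := by
  have hne : {x | x ∈ Icc R₁ R₂ ∧ ∀ s ∈ Ico R₁ x, 0 < u s}.Nonempty :=
    ⟨R₁, left_mem_Icc.mpr hR, fun s hs => absurd hs.2 hs.1.not_gt⟩
  obtain ⟨x, hx, htx⟩ := exists_lt_of_lt_csSup hne ht.2
  exact hx.2 t ⟨ht.1, htx⟩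

lemma nonneg_of_le_rOne (hR : R₁ ≤ R₂) (hu : ContinuousOn u (Icc R₁ (rOne R₁ R₂ u)))
    (h0 : 0 ≤ u R₁) (ht : t ∈ Icc R₁ (rOne R₁ R₂ u)) : 0 ≤ u t := by
  rcases (ht.1.trans ht.2).eq_or_lt with heq | hlt
  · rwa [le_antisymm (ht.2.trans_eq heq.symm) ht.1]
  · rw [← closure_Ico hlt.ne] at hu ht
    exact le_on_closure (fun s hs => (pos_of_lt_rOne hR hs).le) continuousOn_const hu ht

end FirstZero

theorem stmt18_general {p : ℝ} (hp : 1 < p) {N : ℕ} (hN : 1 ≤ N) {R2 : ℝ} (hR2 : 0 < R2)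
    {f : ℝ → ℝ} (hf : ContinuousOn f (Ici 0)) (hf0 : f 0 = 0) (hpos : ∀ s, 1 < s → 0 < f s)
    {η L : ℝ} (hη : 0 < η) (hη1 : η < 1) (hL : (L : EReal) < pstar p N)
    (hsubc : ∀ᶠ s in atTop, fstar f s * s / Fint f (η * s) ≤ L) (M : ℝ) :
    ∃ D : ℝ, 0 < D ∧ ∀ d : ℝ, D ≤ d → ∀ u : ℝ → ℝ, CauchySol p N 0 R2 (fhat f) u d →
      ∀ x ∈ Icc 0 (rOne 0 R2 u), M ≤ u x + |deriv u x| := by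
  obtain ⟨s₀, hs₀⟩ := exists_isSubcriticalFrom hf hf0 hpos hη hη1 hsubc
  obtain ⟨a, ha, han, haL⟩ := exists_pohozaev_coefficient (zero_lt_one.trans hp) hN hL
  obtain ⟨n, rfl⟩ := Nat.exists_eq_add_of_le' hN
  push_cast at han haL
  obtain ⟨D, hD0, hD⟩ := hs₀.exists_forall_le_add_abs_deriv hp hR2 ha han haL M
  refine ⟨D, hD0, fun d hd u h x hx => ?_⟩
  have hr1 : rOne 0 R2 u ≤ R2 := rOne_le hR2.le
  exact hD d hd u h x ⟨hx.1, hx.2.trans hr1⟩ fun t ht =>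
    nonneg_of_le_rOne hR2.le (h.mono hr1).continuousOn (by linarith [h.apply_left])
      ⟨ht.1, ht.2.trans hx.2⟩

theorem stmt18 (p : ℝ) (hp : 1 < p) (N : ℕ) (hN : 1 ≤ N)
    (R2 : ℝ) (hR2 : 0 < R2)
    (f : ℝ → ℝ) (hreg : Freg f) (heq : Feq f) (h0 : Fzero p f) (hsubc : Fsubc p N f) :
    ∀ M : ℝ, 0 < M → ∃ D : ℝ, 0 < D ∧ ∀ d : ℝ, D ≤ d →
      ∀ u : ℝ → ℝ, CauchySol p N 0 R2 (fhat f) u d →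
        ∀ x ∈ Icc 0 (rOne 0 R2 u), M ≤ u x + |deriv u x| := by
  obtain ⟨η, -, hη, hη1, L, hL, hev⟩ := hsubc
  exact fun M _ => stmt18_general hp hN hR2 hreg.1 heq.1 heq.2.2.2 hη hη1 hL hev M
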